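/- For t ≥ 2, as formal power series: ∑_{n ≥ 0} χ_t(n) q^{(n² − (2^{t+1}−3)²)/(3·2^{t+2})} = (q^{2^t−1}; q^{2^{t+1}})_∞ (q^{2^t+1}; q^{2^{t+1}})_∞ (q^{2^{t+1}}; q^{2^{t+1}})_∞ (q²; q^{2^{t+2}})_∞ (q^{2^{t+2}−2}; q^{2^{t+2}})_∞. -/

import Mathlib

/-!
With `h = 2 ^ t`, the numbers `n ≥ 0` with `χ_t n = 1` are the `|6hk + 2h - 3|` and those with
`χ_t n = -1` are the `|6hk + 4h - 3|`, where `k` runs once over `ℤ` in each case. Summing over `k`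
turns the theta series into the sum side of Watson's quintuple product identity in the base
`q ^ (2h)` at `x = q ^ (h - 1)`.

The quintuple product identity (`quintuple_product`) follows from the Jacobi triple product.
Multiplying the triple product for `(x; q)` by the one for `(q x²; q²)` gives a double sum over
`(m, l)`. Grouping it by the exponent `m + 2l = 3k + r` of `x`, with `0 ≤ r < 3`, the inner sum
is a monomial in `q` and `x` times a sum that does not depend on `k`: up to sign this is
`∑ (-1)^n q^(3n² + n) = (q²; q²)_∞` for `r = 0, 1`, by the pentagonal number theorem, and it
vanishes by antisymmetry for `r = 2`. Cancelling the nonzero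
factor `(q²; q²)_∞` leaves the identity.

The triple product (`jacobi_triple_product`) is the limit of its finite form, which is the
`q`-binomial theorem shifted by `q ^ (-n)`. The Gaussian binomial coefficients there are uniformly
bounded and tend to `1 / (q; q)_∞`, so dominated convergence applies. The pentagonal number theorem
is the special case with base `p³` and `z = p²`, where `p = q²`.
-/

/-- The periodic function `χ_t` of period `3·2^(t+1)`. -/
def chi (t : ℕ) (n : ℤ) : ℤ :=
  if n % (3 * 2 ^ (t + 1)) = (2 ^ (t + 1) - 3) % (3 * 2 ^ (t + 1)) ∨
      n % (3 * 2 ^ (t + 1)) = (3 + 2 ^ (t + 2)) % (3 * 2 ^ (t + 1)) then 1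
  else if n % (3 * 2 ^ (t + 1)) = (2 ^ (t + 1) + 3) % (3 * 2 ^ (t + 1)) ∨
      n % (3 * 2 ^ (t + 1)) = (2 ^ (t + 2) - 3) % (3 * 2 ^ (t + 1)) then -1
  else 0

/-- The `j`-th (generalized) triangular exponent `j (j - 1) / 2`; the division is exact. -/
def tri (j : ℤ) : ℤ := j * (j - 1) / 2

lemma two_mul_tri (j : ℤ) : 2 * tri j = j * (j - 1) :=
  Int.two_mul_ediv_two_of_even (Int.even_mul_pred_self j)

lemma tri_add_one (j : ℤ) : tri (j + 1) = tri j + j := by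
  have := two_mul_tri j
  have := two_mul_tri (j + 1)
  linarith

/-- The infinite `q`-shifted factorial `(a; q)_∞`. -/
noncomputable def qPoch (a q : ℂ) : ℂ := ∏' k : ℕ, (1 - a * q ^ k)

/-- The `j`-th term `(-1)^j q^{j(j-1)/2} z^j` of the bilateral theta series. -/
noncomputable def thetaTerm (q z : ℂ) (j : ℤ) : ℂ := (-1) ^ j * q ^ tri j * z ^ j

/-- The Gaussian binomial coefficient `[N, i]_q`, defined by the `q`-Pascal rule so that no division
is needed. -/
def qBinom (q : ℂ) : ℕ → ℕ → ℂ
  | _, 0 => 1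
  | 0, _ + 1 => 0
  | N + 1, i + 1 => qBinom q N i + q ^ (i + 1) * qBinom q N (i + 1)

/-- The finite factorial `(q; q)_n`. -/
def qFact (q : ℂ) (n : ℕ) : ℂ := ∏ k ∈ Finset.range n, (1 - q * q ^ k)

/-! ### The finite triple product -/

lemma qBinom_zero_right (q : ℂ) (N : ℕ) : qBinom q N 0 = 1 := by cases N <;> rfl

lemma qBinom_eq_zero_of_lt (q : ℂ) (N i : ℕ) (h : N < i) : qBinom q N i = 0 := by
  induction N generalizing i with
  | zero => obtain _ | i := i
            · omega
            · rfl
  | succ N ih =>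
    obtain _ | i := i
    · omega
    · rw [qBinom, ih i (by omega), ih (i + 1) (by omega)]; simp

/-- The product formula `[N, i]_q = (q; q)_N / ((q; q)_i (q; q)_{N-i})`, cleared of denominators. -/
lemma qBinom_mul_qFact (q : ℂ) (N i : ℕ) (h : i ≤ N) :
    qBinom q N i * (qFact q i * qFact q (N - i)) = qFact q N := by
  induction N generalizing i with
  | zero => obtain rfl : i = 0 := by omega
            simp [qBinom, qFact]
  | succ N ih =>
    obtain _ | i := i
    · simp [qBinom_zero_right, qFact]
    · rw [qBinom]
      have h1 := ih i (by omega)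
      have e1 : qFact q (i + 1) = qFact q i * (1 - q ^ (i + 1)) := by
        rw [qFact, Finset.prod_range_succ, qFact, pow_succ']
      have e2 : qFact q (N + 1) = qFact q N * (1 - q ^ (N + 1)) := by
        rw [qFact, Finset.prod_range_succ, qFact, pow_succ']
      rw [Nat.add_sub_add_right]
      rcases (show i ≤ N by omega).eq_or_lt with rfl | hlt
      · rw [qBinom_eq_zero_of_lt q i (i + 1) (by omega), e1]
        linear_combination (1 - q ^ (i + 1)) * h1
      · have h2 := ih (i + 1) (by omega)
        have e3 : qFact q (N - i) = qFact q (N - (i + 1)) * (1 - q ^ (N - i)) := by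
          rw [show N - i = N - (i + 1) + 1 by omega, qFact, Finset.prod_range_succ, ← qFact,
            pow_succ']
        have e4 : q ^ (N + 1) = q ^ (i + 1) * q ^ (N - i) := by
          rw [← pow_add]; congr 1; omega
        rw [e2, e4]
        rw [e1] at h2 ⊢
        rw [e3] at h1 ⊢
        linear_combination (1 - q ^ (i + 1)) * h1 + q ^ (i + 1) * (1 - q ^ (N - i)) * h2

/-- The `q`-binomial theorem. -/
lemma prod_one_add_mul_pow (q x : ℂ) (N : ℕ) :
    ∏ k ∈ Finset.range N, (1 + x * q ^ k) =
      ∑ i ∈ Finset.range (N + 1), q ^ (i.choose 2) * qBinom q N i * x ^ i := by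
  induction N generalizing x with
  | zero => simp [qBinom]
  | succ N ih =>
    rw [Finset.prod_range_succ']
    have : ∀ k, x * q ^ (k + 1) = (x * q) * q ^ k := fun k => by ring
    simp only [this]
    rw [ih (x * q), Finset.sum_range_succ' _ (N + 1)]
    have hz : ∑ i ∈ Finset.range (N + 1), q ^ (i.choose 2) * qBinom q N i * (x * q) ^ i =
        ∑ i ∈ Finset.range (N + 1), q ^ ((i + 1).choose 2) * qBinom q N (i + 1) *
          (x * q) ^ (i + 1) + 1 := by
      rw [Finset.sum_range_succ', Finset.sum_range_succ _ N,
        qBinom_eq_zero_of_lt q N (N + 1) (by omega)]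
      simp [qBinom_zero_right]
    rw [pow_zero, mul_one, mul_add, mul_one]
    nth_rw 1 [hz]
    simp only [Nat.choose_zero_succ, qBinom_zero_right, pow_zero, mul_one]
    rw [add_right_comm, Finset.sum_mul, ← Finset.sum_add_distrib]
    congr 1
    refine Finset.sum_congr rfl fun i _ => ?_
    rw [qBinom, Nat.choose_succ_succ' i 1, Nat.choose_one_right]
    ring

/-- Shifting the `q`-binomial theorem by `q^{-n}` gives the finite triple product, in which the
Gaussian binomial coefficients with upper index `2n` weight the terms of the theta series. -/
lemma finite_triple_product {q z : ℂ} (hq : q ≠ 0) (hz : z ≠ 0) (n : ℕ) :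
    (∏ k ∈ Finset.range n, (1 - z * q ^ k)) * ∏ k ∈ Finset.range n, (1 - q / z * q ^ k) =
      ∑ i ∈ Finset.range (2 * n + 1), qBinom q (2 * n) i * thetaTerm q z (i - n) := by
  -- Each factor with a negative exponent is turned round: `1 - z q^(-k-1)` equals
  -- `-z q^(-k-1) (1 - q^(k+1) / z)`; `hC` collects the constants so produced.
  have hC : ∏ k ∈ Finset.range n, (-z * q ^ (-(k : ℤ) - 1)) = (-z) ^ n * q ^ (-tri (n + 1)) := by
    induction n with
    | zero => simp [tri]
    | succ n ih =>
      rw [Finset.prod_range_succ, ih, pow_succ]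
      push_cast
      rw [tri_add_one (n + 1), neg_add, zpow_add₀ hq, neg_add']
      ring
  have hL : ∏ k ∈ Finset.range (2 * n), (1 + -z * q ^ (-n : ℤ) * q ^ k) =
      ((-z) ^ n * q ^ (-tri (n + 1))) * ((∏ k ∈ Finset.range n, (1 - z * q ^ k)) *
        ∏ k ∈ Finset.range n, (1 - q / z * q ^ k)) := by
    have h1 : ∏ k ∈ Finset.range n, (1 + -z * q ^ (-n : ℤ) * q ^ (n + k)) =
        ∏ k ∈ Finset.range n, (1 - z * q ^ k) := by
      refine Finset.prod_congr rfl fun k _ => ?_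
      rw [pow_add, zpow_neg, zpow_natCast]
      field_simp
      ring
    have h2 : ∏ k ∈ Finset.range n, (1 + -z * q ^ (-n : ℤ) * q ^ k) =
        ∏ k ∈ Finset.range n, ((-z * q ^ (-(k : ℤ) - 1)) * (1 - q / z * q ^ k)) := by
      rw [← Finset.prod_range_reflect]
      refine Finset.prod_congr rfl fun k hk => ?_
      have hk := Finset.mem_range.mp hk
      have : q ^ (-n : ℤ) * q ^ (n - 1 - k) = q ^ (-(k : ℤ) - 1) := by
        rw [← zpow_natCast, ← zpow_add₀ hq]; congr 1; omega
      rw [mul_assoc, this]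
      have h2 : q ^ (-(k : ℤ) - 1) * (q * q ^ k) = 1 := by
        rw [← pow_succ', ← zpow_natCast, ← zpow_add₀ hq]
        simp
      have h3 : z * (q / z) = q := mul_div_cancel₀ q hz
      linear_combination (-1 : ℂ) * h2 - q ^ (-(k : ℤ) - 1) * q ^ k * h3
    rw [two_mul, Finset.prod_range_add, h1, h2, Finset.prod_mul_distrib, hC]
    ring
  have key := prod_one_add_mul_pow q (-z * q ^ (-n : ℤ)) (2 * n)
  rw [hL] at key
  have hne : (-z) ^ n * q ^ (-tri (n + 1)) ≠ 0 :=
    mul_ne_zero (pow_ne_zero _ (neg_ne_zero.mpr hz)) (zpow_ne_zero _ hq)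
  refine mul_left_cancel₀ hne (key.trans ?_)
  rw [Finset.mul_sum]
  refine Finset.sum_congr rfl fun i _ => ?_
  have e1 : tri (i - n) = tri (n + 1) + (i.choose 2 : ℕ) + -n * i := by
    have h1 := two_mul_tri (i - n)
    have h2 := two_mul_tri (n + 1)
    have h3 : 2 * ((i.choose 2 : ℕ) : ℤ) = i * (i - 1) := by
      rw [← two_mul_tri i, tri, Nat.choose_two_right]
      rcases i with _ | i
      · simp
      · push_cast; simp
    linarith
  have hz' : (-z) ^ n * (-z) ^ ((i : ℤ) - n) = (-z) ^ i := by
    rw [← zpow_natCast, ← zpow_add₀ (neg_ne_zero.mpr hz), ← zpow_natCast]; congr 1; omega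
  have hs : thetaTerm q z (i - n) = q ^ tri (i - n) * (-z) ^ ((i : ℤ) - n) := by
    rw [thetaTerm, neg_eq_neg_one_mul z, mul_zpow]; ring
  rw [hs, mul_pow, ← hz', e1, zpow_add₀ hq, zpow_add₀ hq, zpow_neg q (tri (n + 1)),
    zpow_natCast q (i.choose 2), zpow_mul, zpow_natCast _ i]
  have hT := zpow_ne_zero (tri (n + 1)) hq
  field_simp

/-! ### The Jacobi triple product -/

lemma summable_norm_const_mul_pow {q : ℂ} (hq1 : ‖q‖ < 1) (a : ℂ) :
    Summable fun k : ℕ => ‖-(a * q ^ k)‖ := by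
  simp only [norm_neg, norm_mul, norm_pow]
  exact (summable_geometric_of_lt_one (norm_nonneg q) hq1).mul_left _

lemma tendsto_qPoch {q : ℂ} (hq1 : ‖q‖ < 1) (a : ℂ) :
    Filter.Tendsto (fun n => ∏ k ∈ Finset.range n, (1 - a * q ^ k)) Filter.atTop
      (nhds (qPoch a q)) := by
  have := (multipliable_one_add_of_summable
    (summable_norm_const_mul_pow hq1 a)).tendsto_prod_tprod_nat
  simpa only [← sub_eq_add_neg, qPoch] using this

lemma one_sub_self_pow_ne_zero {q : ℂ} (hq1 : ‖q‖ < 1) (k : ℕ) : 1 - q * q ^ k ≠ 0 := by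
  intro h
  have h1 : ‖q ^ (k + 1)‖ = 1 := by
    rw [pow_succ', ← sub_eq_zero.mp h, norm_one]
  rw [norm_pow] at h1
  exact (pow_lt_one₀ (norm_nonneg q) hq1 (Nat.succ_ne_zero k)).ne h1

lemma qPoch_self_ne_zero {q : ℂ} (hq1 : ‖q‖ < 1) : qPoch q q ≠ 0 := by
  have := tprod_one_add_ne_zero_of_summable (f := fun k : ℕ => -(q * q ^ k))
    (fun k => by rw [← sub_eq_add_neg]; exact one_sub_self_pow_ne_zero hq1 k)
    (summable_norm_const_mul_pow hq1 q)
  simpa only [← sub_eq_add_neg, qPoch] using this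

lemma qFact_ne_zero {q : ℂ} (hq1 : ‖q‖ < 1) (n : ℕ) : qFact q n ≠ 0 :=
  Finset.prod_ne_zero_iff.mpr fun k _ => one_sub_self_pow_ne_zero hq1 k

lemma summable_tri_pow {r w : ℝ} (hr0 : 0 < r) (hr : r < 1) (hw : 0 < w) :
    Summable fun n : ℕ => r ^ tri n * w ^ n := by
  refine summable_of_ratio_test_tendsto_lt_one (l := 0) one_pos
    (Filter.Eventually.of_forall fun n => by positivity) ?_
  have h : ∀ n : ℕ, ‖r ^ tri (n + 1 : ℕ) * w ^ (n + 1)‖ / ‖r ^ tri n * w ^ n‖ = r ^ n * w := by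
    intro n
    have e : tri (n + 1 : ℕ) = tri n + n := by
      rw [Nat.cast_succ, tri_add_one]
    rw [Real.norm_of_nonneg (by positivity), Real.norm_of_nonneg (by positivity), e,
      zpow_add₀ hr0.ne', zpow_natCast]
    have : r ^ tri n ≠ 0 := by positivity
    field_simp
    ring
  simp only [h]
  simpa using (tendsto_pow_atTop_nhds_zero_of_lt_one hr0.le hr).mul_const w

lemma summable_norm_thetaTerm {q z : ℂ} (hq : q ≠ 0) (hq1 : ‖q‖ < 1) (hz : z ≠ 0) :
    Summable fun j : ℤ => ‖thetaTerm q z j‖ := by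
  have hq0 := norm_pos_iff.mpr hq
  have hz0 := norm_pos_iff.mpr hz
  have hn : ∀ j, ‖thetaTerm q z j‖ = ‖q‖ ^ tri j * ‖z‖ ^ j := fun j => by
    simp [thetaTerm, norm_zpow]
  simp only [hn]
  refine Summable.of_nat_of_neg (by simpa using summable_tri_pow hq0 hq1 hz0) ?_
  refine (summable_tri_pow hq0 hq1 (div_pos hq0 hz0)).congr fun n => ?_
  have e : tri (-n) = tri n + n := by
    have := two_mul_tri n
    have := two_mul_tri (-n)
    linarith
  rw [e, zpow_add₀ hq0.ne', div_pow, zpow_neg, zpow_natCast, zpow_natCast]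
  ring

/-- The Jacobi triple product identity. -/
theorem jacobi_triple_product {q z : ℂ} (hq : q ≠ 0) (hq1 : ‖q‖ < 1) (hz : z ≠ 0) :
    qPoch z q * qPoch (q / z) q * qPoch q q = ∑' j : ℤ, thetaTerm q z j := by
  classical
  set P := qPoch q q with hP
  have hP0 : P ≠ 0 := qPoch_self_ne_zero hq1
  have hF : Filter.Tendsto (qFact q) Filter.atTop (nhds P) := tendsto_qPoch hq1 q
  have hG : Filter.Tendsto (fun n => (qFact q n)⁻¹) Filter.atTop (nhds P⁻¹) := hF.inv₀ hP0
  obtain ⟨A, hA⟩ := hF.norm.bddAbove_range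
  obtain ⟨B, hB⟩ := hG.norm.bddAbove_range
  have hA' : ∀ n, ‖qFact q n‖ ≤ A := fun n => hA ⟨n, rfl⟩
  have hB' : ∀ n, ‖(qFact q n)⁻¹‖ ≤ B := fun n => hB ⟨n, rfl⟩
  have hA0 : 0 ≤ A := (norm_nonneg _).trans (hA' 0)
  have hB0 : 0 ≤ B := (norm_nonneg _).trans (hB' 0)
  -- `f n` is the `n`-th finite sum, extended by zero to `ℤ` and indexed by the exponent `j` of `z`.
  let f : ℕ → ℤ → ℂ := fun n j =>
    if -(n : ℤ) ≤ j ∧ j ≤ n then qBinom q (2 * n) (j + n).toNat * thetaTerm q z j else 0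
  have hf : ∀ (n : ℕ) (j : ℤ), -(n : ℤ) ≤ j ∧ j ≤ n → f n j =
      qFact q (2 * n) * (qFact q (j + n).toNat)⁻¹ * (qFact q ((n : ℤ) - j).toNat)⁻¹ *
        thetaTerm q z j := by
    intro n j h
    have h1 := qBinom_mul_qFact q (2 * n) (j + n).toNat (by omega)
    rw [show 2 * n - (j + n).toNat = ((n : ℤ) - j).toNat by omega] at h1
    have := qFact_ne_zero hq1 (j + n).toNat
    have := qFact_ne_zero hq1 ((n : ℤ) - j).toNat
    simp only [f, if_pos h]
    rw [← h1]
    field_simp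
  have hfin : ∀ n, ∑' j, f n j =
      (∏ k ∈ Finset.range n, (1 - z * q ^ k)) * ∏ k ∈ Finset.range n, (1 - q / z * q ^ k) := by
    intro n
    rw [finite_triple_product hq hz, tsum_eq_sum (s := Finset.Icc (-(n : ℤ)) n)]
    · refine Finset.sum_nbij' (fun j => (j + n).toNat) (fun i => (i : ℤ) - n) ?_ ?_ ?_ ?_ ?_
      · intro j hj
        simp only [Finset.mem_Icc, Finset.mem_range] at *
        omega
      · intro j hj
        simp only [Finset.mem_Icc, Finset.mem_range] at *
        omega
      · intro j hj
        simp only [Finset.mem_Icc] at *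
        omega
      · intro j hj
        simp
      · intro j hj
        simp only [Finset.mem_Icc] at hj
        simp only [f, if_pos hj]
        congr 2
        omega
    · intro j hj
      rw [Finset.mem_Icc] at hj
      simp only [f, if_neg hj]
  have hlim : Filter.Tendsto (fun n => ∑' j, f n j) Filter.atTop
      (nhds (∑' j, P⁻¹ * thetaTerm q z j)) := by
    refine tendsto_tsum_of_dominated_convergence
      (bound := fun j => A * B * B * ‖thetaTerm q z j‖)
      ((summable_norm_thetaTerm hq hq1 hz).mul_left _) (fun j => ?_)
      (Filter.Eventually.of_forall fun n j => ?_)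
    · have t0 : Filter.Tendsto (fun n : ℕ => 2 * n) Filter.atTop Filter.atTop :=
        Filter.tendsto_atTop_mono (fun n => Nat.le_mul_of_pos_left n two_pos) Filter.tendsto_id
      have t1 : Filter.Tendsto (fun n : ℕ => (j + n).toNat) Filter.atTop Filter.atTop := by
        refine Filter.tendsto_atTop.mpr fun b => ?_
        filter_upwards [Filter.eventually_ge_atTop (b + j.natAbs)] with n hn
        omega
      have t2 : Filter.Tendsto (fun n : ℕ => ((n : ℤ) - j).toNat) Filter.atTop Filter.atTop := by
        refine Filter.tendsto_atTop.mpr fun b => ?_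
        filter_upwards [Filter.eventually_ge_atTop (b + j.natAbs)] with n hn
        omega
      have := (((hF.comp t0).mul (hG.comp t1)).mul (hG.comp t2)).mul_const (thetaTerm q z j)
      rw [mul_inv_cancel₀ hP0, one_mul] at this
      refine this.congr' ?_
      filter_upwards [Filter.eventually_ge_atTop j.natAbs] with n hn
      rw [hf n j (by omega)]
      rfl
    · by_cases h : -(n : ℤ) ≤ j ∧ j ≤ n
      · rw [hf n j h, norm_mul, norm_mul, norm_mul]
        gcongr
        exacts [hA' _, hB' _, hB' _]
      · simp only [f, if_neg h, norm_zero]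
        positivity
  simp only [hfin] at hlim
  rw [tendsto_nhds_unique ((tendsto_qPoch hq1 z).mul (tendsto_qPoch hq1 (q / z))) hlim,
    tsum_mul_left]
  field_simp

/-! ### The quintuple product -/

lemma norm_pow_lt_one {q : ℂ} (hq1 : ‖q‖ < 1) {n : ℕ} (hn : n ≠ 0) : ‖q ^ n‖ < 1 := by
  rw [norm_pow]; exact pow_lt_one₀ (norm_nonneg q) hq1 hn

/-- Splitting the factors of `(p; p)_∞` by their exponent modulo `3`. -/
lemma qPoch_trisection {p : ℂ} (hp1 : ‖p‖ < 1) :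
    qPoch p (p ^ 3) * qPoch (p ^ 2) (p ^ 3) * qPoch (p ^ 3) (p ^ 3) = qPoch p p := by
  have h3 := norm_pow_lt_one hp1 three_ne_zero
  have h := ((tendsto_qPoch h3 p).mul (tendsto_qPoch h3 (p ^ 2))).mul (tendsto_qPoch h3 (p ^ 3))
  have t : Filter.Tendsto (fun n : ℕ => 3 * n) Filter.atTop Filter.atTop :=
    Filter.tendsto_atTop_mono (fun n => Nat.le_mul_of_pos_left n three_pos) Filter.tendsto_id
  refine tendsto_nhds_unique h (((tendsto_qPoch hp1 p).comp t).congr fun n => ?_)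
  simp only [Function.comp]
  induction n with
  | zero => simp
  | succ n ih =>
    rw [show 3 * (n + 1) = 3 * n + 1 + 1 + 1 by ring, Finset.prod_range_succ,
      Finset.prod_range_succ, Finset.prod_range_succ, ih]
    simp only [Finset.prod_range_succ, ← pow_mul]
    ring

/-- Euler's pentagonal number theorem, in the base `q ^ 2`. -/
lemma tsum_pentagonal {q : ℂ} (hq : q ≠ 0) (hq1 : ‖q‖ < 1) :
    ∑' n : ℤ, (-1 : ℂ) ^ n * q ^ (3 * n ^ 2 + n) = qPoch (q ^ 2) (q ^ 2) := by
  have hp1 := norm_pow_lt_one hq1 two_ne_zero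
  have hp : q ^ 2 ≠ 0 := pow_ne_zero 2 hq
  rw [← qPoch_trisection hp1]
  have := jacobi_triple_product (pow_ne_zero 3 hp) (norm_pow_lt_one hp1 three_ne_zero)
    (pow_ne_zero 2 hp)
  rw [show (q ^ 2) ^ 3 / (q ^ 2) ^ 2 = q ^ 2 by field_simp] at this
  rw [mul_comm (qPoch (q ^ 2) _), this]
  refine tsum_congr fun n => ?_
  rw [thetaTerm, mul_assoc, ← pow_mul, ← pow_mul, ← zpow_natCast, ← zpow_natCast, ← zpow_mul,
    ← zpow_mul, ← zpow_add₀ hq]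
  congr 2
  have := two_mul_tri n
  push_cast
  linarith

/-- The change of summation indices `(m, l) = (k + r - 2n, n + k)`, whose inverse reads off `k` and
`r` as the quotient and the remainder of `m + 2l` modulo `3`. -/
def indexEquiv : (ℤ × Fin 3) × ℤ ≃ ℤ × ℤ where
  toFun p := (p.1.1 + (p.1.2 : ℕ) - 2 * p.2, p.2 + p.1.1)
  invFun p := (((p.1 + 2 * p.2) / 3, ⟨((p.1 + 2 * p.2) % 3).toNat, by omega⟩),
    p.2 - (p.1 + 2 * p.2) / 3)
  left_inv := by
    rintro ⟨⟨k, r, hr⟩, n⟩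
    simp only [Prod.mk.injEq, Fin.mk.injEq]
    omega
  right_inv := by
    rintro ⟨m, n⟩
    simp only [Prod.mk.injEq]
    omega

/-- In the coordinates of `indexEquiv`, the terms of the product of the two theta series separate:
`n` enters only through a factor independent of `k`. -/
lemma thetaTerm_mul_thetaTerm {q x : ℂ} (hq : q ≠ 0) (hx : x ≠ 0) (k r n : ℤ) :
    thetaTerm q x (k + r - 2 * n) * thetaTerm (q ^ 2) (q * x ^ 2) (n + k) =
      ((-1) ^ r * q ^ (tri (k + r) + k ^ 2) * x ^ (3 * k + r)) *
        ((-1) ^ n * q ^ (3 * n ^ 2 + (1 - 2 * r) * n)) := by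
  have hsign : (-1 : ℂ) ^ (k + r - 2 * n) * (-1) ^ (n + k) = (-1) ^ r * (-1) ^ n := by
    have h1 : (-1 : ℂ) ≠ 0 := by simp
    rw [← zpow_add₀ h1, ← zpow_add₀ h1,
      show k + r - 2 * n + (n + k) = 2 * (k - n) + (r + n) by ring, zpow_add₀ h1, zpow_mul]
    simp
  have hqexp : q ^ tri (k + r - 2 * n) * (q ^ 2) ^ tri (n + k) * q ^ (n + k) =
      q ^ (tri (k + r) + k ^ 2) * q ^ (3 * n ^ 2 + (1 - 2 * r) * n) := by
    rw [← zpow_natCast, ← zpow_mul, ← zpow_add₀ hq, ← zpow_add₀ hq, ← zpow_add₀ hq]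
    congr 1
    have := two_mul_tri (k + r - 2 * n)
    have := two_mul_tri (n + k)
    have := two_mul_tri (k + r)
    push_cast
    linarith
  have hxexp : x ^ (k + r - 2 * n) * (x ^ 2) ^ (n + k) = x ^ (3 * k + r) := by
    rw [← zpow_natCast, ← zpow_mul, ← zpow_add₀ hx]
    congr 1
    push_cast
    ring
  calc _ = ((-1 : ℂ) ^ (k + r - 2 * n) * (-1) ^ (n + k)) *
        (q ^ tri (k + r - 2 * n) * (q ^ 2) ^ tri (n + k) * q ^ (n + k)) *
        (x ^ (k + r - 2 * n) * (x ^ 2) ^ (n + k)) := by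
          rw [thetaTerm, thetaTerm, mul_zpow]; ring
    _ = _ := by rw [hsign, hqexp, hxexp]; ring

/-- The inner sum over `n` for each residue `r`: the reflections `n ↦ -n` and `n ↦ 1 - n` reduce
`r = 1` to `r = 0` and make the sum for `r = 2` equal to its negative. -/
lemma tsum_inner {q : ℂ} (hq : q ≠ 0) (hq1 : ‖q‖ < 1) (r : Fin 3) :
    ∑' n : ℤ, (-1 : ℂ) ^ n * q ^ (3 * n ^ 2 + (1 - 2 * ((r : ℕ) : ℤ)) * n) =
      if r = 2 then 0 else qPoch (q ^ 2) (q ^ 2) := by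
  fin_cases r
  · simpa using tsum_pentagonal hq hq1
  · rw [← tsum_pentagonal hq hq1, ← (Equiv.neg ℤ).tsum_eq]
    refine tsum_congr fun n => ?_
    rw [Equiv.neg_apply, zpow_neg, ← inv_zpow, inv_neg, inv_one]
    congr 2
    push_cast
    ring
  · simp only [Fin.reduceFinMk, if_true]
    refine self_eq_neg.mp ?_
    rw [← tsum_neg, ← (Equiv.subLeft (1 : ℤ)).tsum_eq]
    refine tsum_congr fun n => ?_
    rw [Equiv.subLeft_apply, sub_eq_add_neg, zpow_add₀ (by simp), zpow_neg, ← inv_zpow, inv_neg,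
      inv_one, zpow_one, neg_one_mul, neg_mul]
    congr 3
    push_cast
    ring

/-- Up to sign, the terms on the sum side of the quintuple product are those of a theta series in
the base `q ^ 3`. -/
lemma summable_sum_side {q z : ℂ} (hq : q ≠ 0) (hq1 : ‖q‖ < 1) (hz : z ≠ 0) :
    Summable fun k : ℤ => q ^ (3 * tri k) * z ^ k := by
  refine Summable.of_norm ((summable_norm_thetaTerm (pow_ne_zero 3 hq)
    (norm_pow_lt_one hq1 three_ne_zero) hz).congr fun k => ?_)
  rw [zpow_mul]
  simp [thetaTerm, norm_zpow]

/-- Watson's quintuple product identity. -/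
theorem quintuple_product {q x : ℂ} (hq : q ≠ 0) (hq1 : ‖q‖ < 1) (hx : x ≠ 0) :
    qPoch x q * qPoch (q / x) q * qPoch q q * qPoch (q * x ^ 2) (q ^ 2) *
        qPoch (q / x ^ 2) (q ^ 2) =
      ∑' k : ℤ, q ^ (3 * tri k) * (q * x ^ 3) ^ k -
        x * ∑' k : ℤ, q ^ (3 * tri k) * (q ^ 2 * x ^ 3) ^ k := by
  have hp : q ^ 2 ≠ 0 := pow_ne_zero 2 hq
  have hp1 := norm_pow_lt_one hq1 two_ne_zero
  have hy : q * x ^ 2 ≠ 0 := mul_ne_zero hq (pow_ne_zero 2 hx)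
  set c := qPoch (q ^ 2) (q ^ 2) with hc
  have hs1 := summable_norm_thetaTerm hq hq1 hx
  have hs2 := summable_norm_thetaTerm hp hp1 hy
  have J1 := jacobi_triple_product hq hq1 hx
  have J2 := jacobi_triple_product hp hp1 hy
  rw [show q ^ 2 / (q * x ^ 2) = q / x ^ 2 by field_simp, ← hc] at J2
  have hsum := summable_mul_of_summable_norm hs1 hs2
  have hsum' := indexEquiv.summable_iff.mpr hsum
  let F : ℤ × Fin 3 → ℂ := fun p => ((-1) ^ ((p.2 : ℕ) : ℤ) *
    q ^ (tri (p.1 + (p.2 : ℕ)) + p.1 ^ 2) * x ^ (3 * p.1 + (p.2 : ℕ))) * (if p.2 = 2 then 0 else c)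
  have hinner : ∀ p : ℤ × Fin 3, ∑' n : ℤ, thetaTerm q x (indexEquiv (p, n)).1 *
      thetaTerm (q ^ 2) (q * x ^ 2) (indexEquiv (p, n)).2 = F p := fun p => by
    simp only [F]
    rw [hc, ← tsum_inner hq hq1, ← tsum_mul_left]
    exact tsum_congr fun n => thetaTerm_mul_thetaTerm hq hx p.1 (p.2 : ℕ) n
  have hF : Summable F := hsum'.prod.congr fun p => hinner p
  have hprod : (∑' j, thetaTerm q x j) * (∑' j, thetaTerm (q ^ 2) (q * x ^ 2) j) =
      ∑' p, F p := by
    rw [tsum_mul_tsum_of_summable_norm hs1 hs2]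
    refine (indexEquiv.tsum_eq _).symm.trans (hsum'.tsum_prod.trans ?_)
    exact tsum_congr hinner
  have hA := summable_sum_side hq hq1 (mul_ne_zero hq (pow_ne_zero 3 hx))
  have hB := summable_sum_side hq hq1 (mul_ne_zero hp (pow_ne_zero 3 hx))
  have hFk : ∀ k : ℤ, ∑' r : Fin 3, F (k, r) = c * (q ^ (3 * tri k) * (q * x ^ 3) ^ k -
      x * (q ^ (3 * tri k) * (q ^ 2 * x ^ 3) ^ k)) := fun k => by
    have e0 : tri k + k ^ 2 = 3 * tri k + k := by
      have := two_mul_tri k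
      linarith
    have e1 : tri (k + 1) + k ^ 2 = 3 * tri k + (k + k) := by
      have := two_mul_tri k
      have := two_mul_tri (k + 1)
      linarith
    have hx3 : (x ^ 3) ^ k = x ^ (3 * k) := by rw [zpow_mul]; rfl
    have hq2 : (q ^ 2) ^ k = q ^ k * q ^ k := by rw [sq, mul_zpow]
    rw [tsum_fintype, Fin.sum_univ_three]
    simp only [F, Fin.val_zero, Fin.val_one, Nat.cast_zero, Nat.cast_one, add_zero, zpow_zero,
      zpow_one, if_true, mul_zero, mul_zpow, hx3, hq2, e0, e1]
    simp only [zpow_add₀ hq, zpow_add₀ hx]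
    simp
    ring
  rw [hF.tsum_prod] at hprod
  simp only [hFk] at hprod
  rw [tsum_mul_left, hA.tsum_sub (hB.mul_left x), tsum_mul_left, ← J1, ← J2] at hprod
  refine mul_left_cancel₀ (qPoch_self_ne_zero hp1) ?_
  rw [← hc, ← hprod]
  ring

/-! ### The support of `χ_t` -/

lemma chi_apply (t : ℕ) (h : ℤ) (hh : 2 ^ t = h) (h4 : 4 ≤ h) (k r : ℤ) (hr0 : 0 ≤ r)
    (hr : r < 6 * h) :
    chi t (6 * h * k + r) = if r = 2 * h - 3 ∨ r = 4 * h + 3 then 1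
      else if r = 2 * h + 3 ∨ r = 4 * h - 3 then -1 else 0 := by
  have e1 : (2 : ℤ) ^ (t + 1) = 2 * h := by rw [pow_succ, hh]; ring
  have e2 : (2 : ℤ) ^ (t + 2) = 4 * h := by rw [pow_add, hh]; ring
  have e : ∀ s : ℤ, 0 ≤ s → s < 6 * h → s % (6 * h) = s := fun s => Int.emod_eq_of_lt
  rw [chi, e1, e2, show 3 * (2 * h) = 6 * h by ring, Int.mul_add_emod_self_left, e r hr0 hr,
    e (2 * h - 3) (by omega) (by omega), e (3 + 4 * h) (by omega) (by omega),
    e (2 * h + 3) (by omega) (by omega), e (4 * h - 3) (by omega) (by omega),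
    add_comm 3 (4 * h)]

/-- The enumeration of the support of `χ_t` (with `h = 2 ^ t`) by two copies of `ℤ`: the left copy
gives the `n` with `χ_t n = 1`, the right copy those with `χ_t n = -1`. -/
def supportMap (h : ℤ) : ℤ ⊕ ℤ → ℕ
  | .inl k => (6 * h * k + (2 * h - 3)).natAbs
  | .inr k => (6 * h * k + (4 * h - 3)).natAbs

lemma chi_supportMap_inl (t : ℕ) (h : ℤ) (hh : 2 ^ t = h) (h4 : 4 ≤ h) (k : ℤ) :
    chi t (supportMap h (.inl k)) = 1 := by
  rw [supportMap, Int.natCast_natAbs]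
  rcases le_or_gt 0 k with hk | hk
  · rw [abs_of_nonneg (by nlinarith), chi_apply t h hh h4 _ _ (by omega) (by omega)]
    simp
  · rw [abs_of_nonpos (by nlinarith),
      show -(6 * h * k + (2 * h - 3)) = 6 * h * (-k - 1) + (4 * h + 3) by ring,
      chi_apply t h hh h4 _ _ (by omega) (by omega)]
    simp

lemma chi_supportMap_inr (t : ℕ) (h : ℤ) (hh : 2 ^ t = h) (h4 : 4 ≤ h) (k : ℤ) :
    chi t (supportMap h (.inr k)) = -1 := by
  rw [supportMap, Int.natCast_natAbs]
  rcases le_or_gt 0 k with hk | hk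
  · rw [abs_of_nonneg (by nlinarith), chi_apply t h hh h4 _ _ (by omega) (by omega),
      if_neg (by omega), if_pos (by omega)]
  · rw [abs_of_nonpos (by nlinarith),
      show -(6 * h * k + (4 * h - 3)) = 6 * h * (-k - 1) + (2 * h + 3) by ring,
      chi_apply t h hh h4 _ _ (by omega) (by omega), if_neg (by omega), if_pos (by omega)]

lemma mem_range_supportMap (t : ℕ) (h : ℤ) (hh : 2 ^ t = h) (h4 : 4 ≤ h) (n : ℕ)
    (hn : chi t n ≠ 0) : n ∈ Set.range (supportMap h) := by
  have hdiv := Int.mul_ediv_add_emod n (6 * h)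
  set k := (n : ℤ) / (6 * h)
  set r := (n : ℤ) % (6 * h)
  have hr0 : 0 ≤ r := Int.emod_nonneg _ (by omega)
  have hr : r < 6 * h := Int.emod_lt_of_pos _ (by omega)
  rw [← hdiv, chi_apply t h hh h4 _ _ hr0 hr] at hn
  have key : r = 2 * h - 3 ∨ r = 4 * h + 3 ∨ r = 2 * h + 3 ∨ r = 4 * h - 3 := by
    by_contra! hcon
    rw [if_neg (by omega), if_neg (by omega)] at hn
    exact hn rfl
  have neg : ∀ s : ℤ, 6 * h * (-k - 1) + s = -(6 * h * k + (6 * h - s)) := fun s => by ring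
  rcases key with e | e | e | e
  · exact ⟨.inl k, by rw [supportMap]; omega⟩
  · exact ⟨.inl (-k - 1), by rw [supportMap, neg]; omega⟩
  · exact ⟨.inr (-k - 1), by rw [supportMap, neg]; omega⟩
  · exact ⟨.inr k, by rw [supportMap]; omega⟩

/-- Excludes `|a| = |b|` with `a = -b` for two distinct indices in one copy of `ℤ`, and a vanishing
exponent away from the leading term. -/
lemma mul_ne_three {h : ℤ} (h4 : 4 ≤ h) (s : ℤ) : h * s ≠ 3 := fun e => by
  have := Int.le_of_dvd (by norm_num) (Dvd.intro s e)
  omega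

lemma supportMap_injective (t : ℕ) (h : ℤ) (hh : 2 ^ t = h) (h4 : 4 ≤ h) :
    Function.Injective (supportMap h) := by
  have h0 : h ≠ 0 := by omega
  rintro (k | k) (l | l) hkl
  · rcases Int.natAbs_eq_natAbs_iff.mp hkl with e | e
    · have : h * (k - l) = 0 := by linarith
      have := (mul_eq_zero.mp this).resolve_left h0
      rw [sub_eq_zero.mp this]
    · exact absurd (by linarith) (mul_ne_three h4 (3 * (k + l) + 2))
  · have h1 := chi_supportMap_inl t h hh h4 k
    rw [hkl, chi_supportMap_inr t h hh h4 l] at h1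
    omega
  · have h1 := chi_supportMap_inl t h hh h4 l
    rw [← hkl, chi_supportMap_inr t h hh h4 k] at h1
    omega
  · rcases Int.natAbs_eq_natAbs_iff.mp hkl with e | e
    · have : h * (k - l) = 0 := by linarith
      have := (mul_eq_zero.mp this).resolve_left h0
      rw [sub_eq_zero.mp this]
    · exact absurd (by linarith) (mul_ne_three h4 (3 * (k + l) + 4))

lemma exponent_inl (t : ℕ) (h : ℤ) (hh : 2 ^ t = h) (h4 : 4 ≤ h) (k : ℤ) :
    ((supportMap h (.inl k) : ℤ) ^ 2 - (2 ^ (t + 1) - 3) ^ 2) / (3 * 2 ^ (t + 2)) =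
      k * (h * (3 * k + 2) - 3) := by
  rw [supportMap, Int.natCast_natAbs, sq_abs, pow_add, pow_add, hh]
  exact Int.ediv_eq_of_eq_mul_right (by omega) (by ring)

lemma exponent_inr (t : ℕ) (h : ℤ) (hh : 2 ^ t = h) (h4 : 4 ≤ h) (k : ℤ) :
    ((supportMap h (.inr k) : ℤ) ^ 2 - (2 ^ (t + 1) - 3) ^ 2) / (3 * 2 ^ (t + 2)) =
      (3 * k + 1) * (h * (k + 1) - 1) := by
  rw [supportMap, Int.natCast_natAbs, sq_abs, pow_add, pow_add, hh]
  exact Int.ediv_eq_of_eq_mul_right (by omega) (by ring)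

/-- The theta series of `χ_t`, rewritten as a sum over the enumerated support of `χ_t`. -/
lemma tsum_chi_eq (t : ℕ) (h : ℤ) (hh : 2 ^ t = h) (h4 : 4 ≤ h) (q : ℂ) :
    ∑' n : ℕ, (chi t n : ℂ) *
        q ^ (((n : ℤ) ^ 2 - (2 ^ (t + 1) - 3) ^ 2) / (3 * 2 ^ (t + 2))) =
      ∑' p : ℤ ⊕ ℤ, Sum.elim (fun k => q ^ (k * (h * (3 * k + 2) - 3)))
        (fun k => -q ^ ((3 * k + 1) * (h * (k + 1) - 1))) p := by
  rw [← (supportMap_injective t h hh h4).tsum_eq]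
  · refine tsum_congr fun p => ?_
    rcases p with k | k
    · rw [chi_supportMap_inl t h hh h4, exponent_inl t h hh h4]; simp
    · rw [chi_supportMap_inr t h hh h4, exponent_inr t h hh h4]; simp
  · intro n hn
    refine mem_range_supportMap t h hh h4 n fun h0 => hn ?_
    simp only [h0, Int.cast_zero, zero_mul]

/-! ### Specialisation of the quintuple product -/

lemma qPoch_zero_left (q : ℂ) : qPoch 0 q = 1 := by simp [qPoch]

/-- The specialisation `q → q ^ (2h)`, `x = q ^ (h - 1)` of the quintuple product identity. -/
lemma quintuple_special {q : ℂ} (hq : q ≠ 0) (hq1 : ‖q‖ < 1) (h : ℕ) (h4 : 4 ≤ h) :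
    ∑' p : ℤ ⊕ ℤ, Sum.elim (fun k => q ^ (k * ((h : ℤ) * (3 * k + 2) - 3)))
        (fun k => -q ^ ((3 * k + 1) * ((h : ℤ) * (k + 1) - 1))) p =
      qPoch (q ^ (h - 1)) (q ^ (2 * h)) * qPoch (q ^ (h + 1)) (q ^ (2 * h)) *
        qPoch (q ^ (2 * h)) (q ^ (2 * h)) * qPoch (q ^ 2) (q ^ (4 * h)) *
        qPoch (q ^ (4 * h - 2)) (q ^ (4 * h)) := by
  have hQ : q ^ (2 * h) ≠ 0 := pow_ne_zero _ hq
  have hQ1 := norm_pow_lt_one hq1 (show 2 * h ≠ 0 by omega)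
  have hx : q ^ (h - 1) ≠ 0 := pow_ne_zero _ hq
  have W := quintuple_product hQ hQ1 hx
  have d1 : q ^ (2 * h) / q ^ (h - 1) = q ^ (h + 1) := by
    rw [div_eq_iff hx, ← pow_add]; congr 1; omega
  have d2 : q ^ (2 * h) / (q ^ (h - 1)) ^ 2 = q ^ 2 := by
    rw [div_eq_iff (pow_ne_zero 2 hx), ← pow_mul, ← pow_add]; congr 1; omega
  have d3 : q ^ (2 * h) * (q ^ (h - 1)) ^ 2 = q ^ (4 * h - 2) := by
    rw [← pow_mul, ← pow_add]; congr 1; omega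
  have d4 : (q ^ (2 * h)) ^ 2 = q ^ (4 * h) := by
    rw [← pow_mul]; congr 1; omega
  have hA := summable_sum_side hQ hQ1 (mul_ne_zero hQ (pow_ne_zero 3 hx))
  have hB := summable_sum_side hQ hQ1 (mul_ne_zero (pow_ne_zero 2 hQ) (pow_ne_zero 3 hx))
  have hc : ((h - 1 : ℕ) : ℤ) = h - 1 := by omega
  have eA : ∀ k : ℤ, (q ^ (2 * h)) ^ (3 * tri k) * (q ^ (2 * h) * (q ^ (h - 1)) ^ 3) ^ k =
      q ^ (k * ((h : ℤ) * (3 * k + 2) - 3)) := fun k => by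
    rw [← pow_mul, ← pow_add, ← zpow_natCast, ← zpow_natCast, ← zpow_mul, ← zpow_mul,
      ← zpow_add₀ hq]
    congr 1
    have := two_mul_tri k
    push_cast [hc]
    linear_combination 3 * (h : ℤ) * this
  have eB : ∀ k : ℤ, q ^ (h - 1) * ((q ^ (2 * h)) ^ (3 * tri k) *
      ((q ^ (2 * h)) ^ 2 * (q ^ (h - 1)) ^ 3) ^ k) =
      q ^ ((3 * k + 1) * ((h : ℤ) * (k + 1) - 1)) := fun k => by
    rw [← pow_mul, ← pow_mul, ← pow_add, ← zpow_natCast, ← zpow_natCast, ← zpow_natCast,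
      ← zpow_mul, ← zpow_mul, ← zpow_add₀ hq, ← zpow_add₀ hq]
    congr 1
    have := two_mul_tri k
    push_cast [hc]
    linear_combination 3 * (h : ℤ) * this
  have hB' := hB.mul_left (q ^ (h - 1))
  rw [← tsum_mul_left] at W
  simp only [eA, eB, d1, d2, d3] at W hA hB'
  simp only [d4] at W
  rw [Summable.tsum_sum (by exact hA) (by exact hB'.neg)]
  simp only [Sum.elim_inl, Sum.elim_inr]
  rw [tsum_neg, ← sub_eq_add_neg, ← W]
  ring

/-- The case `q = 0`, where only the term `n = 2h - 3` survives. -/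
lemma tsum_zero_base (h : ℤ) (h4 : 4 ≤ h) :
    ∑' p : ℤ ⊕ ℤ, Sum.elim (fun k => (0 : ℂ) ^ (k * (h * (3 * k + 2) - 3)))
        (fun k => -(0 : ℂ) ^ ((3 * k + 1) * (h * (k + 1) - 1))) p = 1 := by
  rw [tsum_eq_single (.inl 0)]
  · simp
  · rintro (k | k) hk
    · have hk0 : k ≠ 0 := fun e => hk (by rw [e])
      exact zero_zpow _ (mul_ne_zero hk0 (sub_ne_zero.mpr (mul_ne_three h4 _)))
    · rw [Sum.elim_inr, neg_eq_zero]
      refine zero_zpow _ (mul_ne_zero (by omega) fun e => mul_ne_three h4 (3 * (k + 1)) ?_)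
      linear_combination 3 * e

/-- The theta series of `χ_t` equals a quintuple product (analytic form, `‖q‖ < 1`). -/
theorem theta_product (t : ℕ) (ht : 2 ≤ t) (q : ℂ) (hq : ‖q‖ < 1) :
    ∑' n : ℕ, (chi t n : ℂ) *
        q ^ (((n : ℤ) ^ 2 - (2 ^ (t + 1) - 3) ^ 2) / (3 * 2 ^ (t + 2))) =
      (∏' k : ℕ, (1 - q ^ (2 ^ t - 1) * (q ^ 2 ^ (t + 1)) ^ k)) *
        (∏' k : ℕ, (1 - q ^ (2 ^ t + 1) * (q ^ 2 ^ (t + 1)) ^ k)) *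
        (∏' k : ℕ, (1 - q ^ 2 ^ (t + 1) * (q ^ 2 ^ (t + 1)) ^ k)) *
        (∏' k : ℕ, (1 - q ^ 2 * (q ^ 2 ^ (t + 2)) ^ k)) *
        (∏' k : ℕ, (1 - q ^ (2 ^ (t + 2) - 2) * (q ^ 2 ^ (t + 2)) ^ k)) := by
  have h4 : 4 ≤ 2 ^ t := Nat.pow_le_pow_right two_pos ht
  have h4' : (4 : ℤ) ≤ ((2 ^ t : ℕ) : ℤ) := by exact_mod_cast h4
  have e1 : 2 ^ (t + 1) = 2 * 2 ^ t := pow_succ' 2 t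
  have e2 : 2 ^ (t + 2) = 4 * 2 ^ t := by rw [pow_add]; ring
  rw [tsum_chi_eq t _ (by push_cast; rfl) h4']
  rw [e1, e2]
  change _ = qPoch (q ^ (2 ^ t - 1)) (q ^ (2 * 2 ^ t)) * qPoch (q ^ (2 ^ t + 1)) (q ^ (2 * 2 ^ t)) *
    qPoch (q ^ (2 * 2 ^ t)) (q ^ (2 * 2 ^ t)) * qPoch (q ^ 2) (q ^ (4 * 2 ^ t)) *
    qPoch (q ^ (4 * 2 ^ t - 2)) (q ^ (4 * 2 ^ t))
  -- The triple and quintuple product identities need a nonzero base.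
  rcases eq_or_ne q 0 with rfl | hq0
  · rw [tsum_zero_base _ h4', zero_pow (by omega), zero_pow (by omega), zero_pow (by omega),
      zero_pow (by omega), zero_pow (by omega), zero_pow (by omega)]
    simp only [qPoch_zero_left, mul_one]
  · exact quintuple_special hq0 hq _ h4
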